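/- arXiv:1512.00577 — 4 statements merged into one kernel-verified Lean document; each statement's English description precedes it below -/
import Mathlib

section
/- The poset (ℤ^{m+n}, ⪯_b) satisfies the finite interval property: for all f, g ∈ ℤ^{m+n} with g ⪯_b f, the set {h ∈ ℤ^{m+n} : g ⪯_b h ⪯_b f} is finite. -/
/-!
The numbers `♯_b(h,a,j)` for all `j` determine the set `{i | h i ≤ a}`, and conversely. Hence, if
`g ⪯ h ⪯ f` and `a` is a level at which `{i | g i ≤ a} = {i | f i ≤ a}`, squeezing gives
`{i | h i ≤ a} = {i | f i ≤ a}` as well (`le_iff_of_between`). For `a` below all values of `f` and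
`g` this set is empty, and for `a` above all of them it is everything. So the values of `h` lie in a
bounded range depending only on `f` and `g`, and the interval is contained in a finite box.
-/

open Finset

/-- The sign `(−1)^{b_i}`. -/
def sgn {N : ℕ} (b : Fin N → Bool) (i : Fin N) : ℤ := if b i then -1 else 1

/-- `b` is a `0^m 1^n`-sequence: exactly `m` entries equal to `0` (false)
and `n` entries equal to `1` (true). -/
def IsZeroOneSeq (m n : ℕ) (b : Fin (m + n) → Bool) : Prop :=
  (Finset.univ.filter (fun i => b i = false)).card = m ∧
  (Finset.univ.filter (fun i => b i = true)).card = n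

/-- `♯_b(f,a,j) = Σ_{i ≥ j, f(i) ≤ a} (−1)^{b_i}` (0-indexed: `j = 0` corresponds to `j = 1`
in the 1-indexed convention). -/
def sharp {N : ℕ} (b : Fin N → Bool) (f : Fin N → ℤ) (a : ℤ) (j : ℕ) : ℤ :=
  ∑ i ∈ Finset.univ.filter (fun i : Fin N => j ≤ i.val ∧ f i ≤ a), sgn b i

/-- The Bruhat order `g ⪯_b f`. -/
def bruhatLE {N : ℕ} (b : Fin N → Bool) (g f : Fin N → ℤ) : Prop :=
  (∀ (a : ℤ) (j : ℕ), sharp b g a j ≤ sharp b f a j) ∧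
  (∀ a : ℤ, sharp b g a 0 = sharp b f a 0)

theorem sharp_eq_add_sharp_succ {N : ℕ} (b : Fin N → Bool) (h : Fin N → ℤ) (a : ℤ) (i : Fin N) :
    sharp b h a i = (if h i ≤ a then sgn b i else 0) + sharp b h a (i + 1) := by
  unfold sharp
  rw [Finset.sum_filter, Finset.sum_filter, ← Finset.sum_ite_eq' Finset.univ i
    (fun _ => if h i ≤ a then sgn b i else 0) |>.trans (if_pos (Finset.mem_univ i)),
    ← Finset.sum_add_distrib]
  refine Finset.sum_congr rfl fun k _ => ?_
  by_cases hk : k = i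
  · subst hk
    simp
  · have : (i : ℕ) ≤ k ↔ (i : ℕ) + 1 ≤ k := by
      have : (k : ℕ) ≠ i := fun e => hk (Fin.ext e)
      omega
    simp [hk, this]

/-- If the sublevel sets of `g` and `f` at `a` agree, then so does that of every `h` in the Bruhat
interval between `g` and `f`: all `♯_b(h,a,j)` are squeezed, and their successive differences in `j`
are `±1` or `0` according to whether `h i ≤ a`. -/
theorem le_iff_of_between {N : ℕ} {b : Fin N → Bool} {f g h : Fin N → ℤ}
    (hgh : bruhatLE b g h) (hhf : bruhatLE b h f) {a : ℤ} (hfg : ∀ i, g i ≤ a ↔ f i ≤ a)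
    (i : Fin N) : h i ≤ a ↔ f i ≤ a := by
  have hsharp : ∀ j, sharp b g a j = sharp b f a j := fun j => by simp only [sharp, hfg]
  have heq : ∀ j, sharp b h a j = sharp b f a j := fun j =>
    le_antisymm (hhf.1 a j) (hsharp j ▸ hgh.1 a j)
  have h1 := sharp_eq_add_sharp_succ b h a i
  have h2 := sharp_eq_add_sharp_succ b f a i
  rw [heq, heq, h2] at h1
  have hne : sgn b i ≠ 0 := by unfold sgn; split_ifs <;> decide
  split_ifs at h1 with h3 h4 <;> grind

/-- Finite interval property for the Bruhat order. -/
theorem bruhatLE_finite_interval (m n : ℕ) (b : Fin (m + n) → Bool) (hb : IsZeroOneSeq m n b)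
    (f g : Fin (m + n) → ℤ) (hgf : bruhatLE b g f) :
    {h : Fin (m + n) → ℤ | bruhatLE b g h ∧ bruhatLE b h f}.Finite := by
  obtain ⟨U, hU⟩ : ∃ U : ℤ, ∀ i, |f i| + |g i| ≤ U :=
    ⟨∑ i, (|f i| + |g i|), fun i =>
      Finset.single_le_sum (f := fun i => |f i| + |g i|) (fun _ _ => by positivity)
        (Finset.mem_univ i)⟩
  have hbd : ∀ i, (-U ≤ f i ∧ f i ≤ U) ∧ (-U ≤ g i ∧ g i ≤ U) := fun i => by
    have := hU i
    exact ⟨abs_le.1 (by linarith [abs_nonneg (g i)]), abs_le.1 (by linarith [abs_nonneg (f i)])⟩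
  refine (Set.finite_Icc (fun _ => -U : Fin (m + n) → ℤ) (fun _ => U)).subset ?_
  rintro h ⟨hgh, hhf⟩
  refine ⟨fun i => ?_, fun i => ?_⟩
  · have := le_iff_of_between hgh hhf (a := -U - 1) (fun k => by have := hbd k; omega) i
    have := hbd i
    show -U ≤ h i
    omega
  · exact (le_iff_of_between hgh hhf (a := U)
      (fun k => iff_of_true (hbd k).2.2 (hbd k).1.2) i).2 (hbd i).1.2
end

section
/- Let h ∈ ℤ^{m+n} and suppose x ∈ 𝔖^b is such that f := h·x satisfies, for every block I_k, the weak-dominance condition (−1)^{b_{r_k}} f(r_{k−1}+1) ≥ ⋯ ≥ (−1)^{b_{r_k}} f(r_k). Then h ⪯_b h·x. In particular, for every h ∈ ℤ^{m+n} there exists f ∈ ℤ^{m+n} with h ⪯_b f such that g·y ⪯_b f for all g ⪯_b h and all y ∈ 𝔖^b. -/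
/-!
The Bruhat order with a weakly dominant right-hand side is detected at the block boundaries: if
`f` is weakly dominant and `♯(g, a, r k) ≤ ♯(f, a, r k)` for all `a` and all `k ≤ d`, then
`♯(g, a, j) ≤ ♯(f, a, j)` for every `j` (`sharp_le_of_boundary`). Indeed, let `j` lie in the block
`[r k, r (k+1))`, and write `c_f i` for the contribution of position `i` to `♯(f, a, ·)`. As `f` is
weakly dominant, either `c_f` takes its largest possible value throughout `[j, r (k+1))`, or it
takes its smallest possible value throughout `[r k, j)`. In the first case the inequality at
`r (k+1)` propagates down to `j`, in the second case the inequality at `r k` propagates up to `j`.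

The numbers `♯(h, a, r k)` do not change when `h` is replaced by `h·x` with `x ∈ 𝔖^b`
(`sharp_comp_boundary`), which gives the first claim. For the second claim take `f = h·x` to be a
weakly dominant rearrangement of `h`, obtained by sorting within the blocks
(`exists_weaklyDominant`): for `g ⪯ h` the boundary values of `g·y` are those of `g`, hence bounded
by those of `h`, which are those of `f`.
-/

open Finset

/-- Block decomposition data: `0 = r 0 < r 1 < ⋯ < r d = N`, `b` is constant on each block
`I_k = {r (k-1), …, r k − 1}` (0-indexed), and `b` changes value at each block boundary. -/
def BlockData (N : ℕ) (b : Fin N → Bool) (d : ℕ) (r : ℕ → ℕ) : Prop :=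
  r 0 = 0 ∧ r d = N ∧ (∀ k < d, r k < r (k + 1)) ∧
  (∀ k < d, ∀ i j : Fin N,
    r k ≤ i.val → i.val < r (k + 1) → r k ≤ j.val → j.val < r (k + 1) → b i = b j) ∧
  (∀ k, 0 < k → k < d → ∀ (h1 : r k - 1 < N) (h2 : r k < N), b ⟨r k - 1, h1⟩ ≠ b ⟨r k, h2⟩)

/-- Membership in `𝔖^b`: the permutation `x` preserves each block `I_k`. -/
def BlockPerm (N : ℕ) (d : ℕ) (r : ℕ → ℕ) (x : Equiv.Perm (Fin N)) : Prop :=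
  ∀ k < d, ∀ i : Fin N, r k ≤ i.val → i.val < r (k + 1) →
    r k ≤ (x i).val ∧ (x i).val < r (k + 1)

/-- Weak dominance on every block: `(−1)^{b_i} f(i) ≥ (−1)^{b_i} f(j)` for `i ≤ j`
in the same block. -/
def WeaklyDominant {N : ℕ} (b : Fin N → Bool) (d : ℕ) (r : ℕ → ℕ) (f : Fin N → ℤ) : Prop :=
  ∀ k < d, ∀ i j : Fin N, r k ≤ i.val → i.val ≤ j.val → j.val < r (k + 1) →
    sgn b i * f j ≤ sgn b i * f i

/-- The contribution of position `i` to `♯_b(f, a, j)`, for any `j ≤ i`. -/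
def contrib {N : ℕ} (b : Fin N → Bool) (f : Fin N → ℤ) (a : ℤ) (i : Fin N) : ℤ :=
  if f i ≤ a then sgn b i else 0

lemma sharp_succ {N : ℕ} (b : Fin N → Bool) (f : Fin N → ℤ) (a : ℤ) (i : Fin N) :
    sharp b f a i.val = sharp b f a (i.val + 1) + contrib b f a i := by
  have e : ∀ j : ℕ, sharp b f a j = ∑ l : Fin N, if j ≤ l.val then contrib b f a l else 0 := by
    intro j
    simp only [sharp, contrib, Finset.sum_filter, ite_and]
  have s : contrib b f a i = ∑ l : Fin N, if l = i then contrib b f a l else 0 := by simp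
  rw [e, e, s, ← Finset.sum_add_distrib]
  refine Finset.sum_congr rfl fun l _ => ?_
  by_cases h : l = i
  · subst h; simp
  · have : l.val ≠ i.val := fun h' => h (Fin.ext h')
    have : i.val ≤ l.val ↔ i.val + 1 ≤ l.val := by omega
    simp [h, this]

lemma sharp_of_ge {N : ℕ} (b : Fin N → Bool) (f : Fin N → ℤ) (a : ℤ) {j : ℕ} (hj : N ≤ j) :
    sharp b f a j = 0 := by
  unfold sharp
  rw [Finset.filter_false_of_mem, Finset.sum_empty]
  intro i _
  have := i.isLt
  omega

/-- If `g` contributes at most as much as `f` at every position of `[p, q)`, then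
`♯(g, a, ·) - ♯(f, a, ·)` does not increase from `q` down to `p`. -/
lemma sharp_sub_le {N : ℕ} (b : Fin N → Bool) (g f : Fin N → ℤ) (a : ℤ) {p q : ℕ} (hpq : p ≤ q)
    (hq : q ≤ N)
    (hc : ∀ i : Fin N, p ≤ i.val → i.val < q → contrib b g a i ≤ contrib b f a i) :
    sharp b g a p - sharp b f a p ≤ sharp b g a q - sharp b f a q := by
  induction q, hpq using Nat.le_induction with
  | base => exact le_rfl
  | succ q hpq ih =>
    have h1 := ih (by omega) fun i hi hi' => hc i hi (by omega)
    have h2 := hc ⟨q, by omega⟩ hpq (Nat.lt_succ_self q)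
    have h3 := sharp_succ b g a ⟨q, by omega⟩
    have h4 := sharp_succ b f a ⟨q, by omega⟩
    simp only at h3 h4
    linarith

lemma blockBound_mono {N d : ℕ} {b : Fin N → Bool} {r : ℕ → ℕ} (hblock : BlockData N b d r) :
    ∀ k l, k ≤ l → l ≤ d → r k ≤ r l := by
  intro k l hkl
  induction l, hkl using Nat.le_induction with
  | base => intro _; exact le_rfl
  | succ l _ ih =>
    intro hl
    exact (ih (by omega)).trans (hblock.2.2.1 l (by omega)).le

/-- The function sending a position to the index of its block. -/
lemma exists_blockIndex {N d : ℕ} {b : Fin N → Bool} {r : ℕ → ℕ} (hblock : BlockData N b d r) :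
    ∃ t : Fin N → ℕ, (∀ i, t i < d ∧ r (t i) ≤ i.val ∧ i.val < r (t i + 1)) ∧
      ∀ i, ∀ k ≤ d, r k ≤ i.val ↔ k ≤ t i := by
  have mono := blockBound_mono hblock
  obtain ⟨h0, hd, -, -, -⟩ := hblock
  have ex : ∀ i : Fin N, ∃ k, k < d ∧ r k ≤ i.val ∧ i.val < r (k + 1) := by
    intro i
    have hex : ∃ k, i.val < r k := ⟨d, hd ▸ i.isLt⟩
    have hs := Nat.find_spec hex
    have hm : Nat.find hex ≤ d := Nat.find_min' hex (hd ▸ i.isLt)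
    obtain ⟨k, hk⟩ : ∃ k, Nat.find hex = k + 1 :=
      Nat.exists_eq_succ_of_ne_zero fun h => by rw [h, h0] at hs; omega
    have hn := Nat.find_min hex (m := k) (by omega)
    rw [hk] at hs hm
    exact ⟨k, by omega, by omega, hs⟩
  choose t ht using ex
  refine ⟨t, ht, fun i k hk => ⟨fun h => ?_, fun h => ?_⟩⟩
  · by_contra! hc
    have := mono (t i + 1) k hc hk
    have := (ht i).2.2
    omega
  · exact (mono k (t i) h (ht i).1.le).trans (ht i).2.1

lemma sharp_comp_boundary {N d : ℕ} {b : Fin N → Bool} {r : ℕ → ℕ} (hblock : BlockData N b d r)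
    (h : Fin N → ℤ) (x : Equiv.Perm (Fin N)) (hx : BlockPerm N d r x) (a : ℤ) {k : ℕ}
    (hk : k ≤ d) : sharp b (h ∘ x) a (r k) = sharp b h a (r k) := by
  obtain ⟨t, ht, htk⟩ := exists_blockIndex hblock
  have hc := hblock.2.2.2.1
  refine Finset.sum_equiv x (fun i => ?_) (fun i _ => ?_)
  · have h1 := hx (t i) (ht i).1 i (ht i).2.1 (ht i).2.2
    have h2 := (htk (x i) (t i) (ht i).1.le).1 h1.1
    have h3 : ¬ t i + 1 ≤ t (x i) := fun h' => by
      have := (htk (x i) (t i + 1) (ht i).1).2 h'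
      omega
    have h4 : t (x i) = t i := by omega
    simp [htk _ k hk, h4]
  · have h1 := hx (t i) (ht i).1 i (ht i).2.1 (ht i).2.2
    simp only [sgn, hc (t i) (ht i).1 i (x i) (ht i).2.1 (ht i).2.2 h1.1 h1.2]

lemma sharp_le_of_boundary {N d : ℕ} {b : Fin N → Bool} {r : ℕ → ℕ} (hblock : BlockData N b d r)
    {g f : Fin N → ℤ} (hf : WeaklyDominant b d r f) (a : ℤ)
    (hgf : ∀ k ≤ d, sharp b g a (r k) ≤ sharp b f a (r k)) (j : ℕ) :
    sharp b g a j ≤ sharp b f a j := by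
  rcases Nat.lt_or_ge j N with hj | hj
  swap
  · rw [sharp_of_ge b g a hj, sharp_of_ge b f a hj]
  obtain ⟨t, ht, htk⟩ := exists_blockIndex hblock
  have hc := hblock.2.2.2.1
  obtain ⟨hkd, hp, hq⟩ := ht ⟨j, hj⟩
  generalize t ⟨j, hj⟩ = k at hkd hp hq
  simp only at hp hq
  have hqN : r (k + 1) ≤ N := (blockBound_mono hblock _ d hkd le_rfl).trans_eq hblock.2.1
  -- All signs in the block agree with the sign at `j`.
  have hsgn : ∀ i : Fin N, r k ≤ i.val → i.val < r (k + 1) → sgn b i = sgn b ⟨j, hj⟩ := by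
    intro i h1 h2
    simp only [sgn, hc k hkd i ⟨j, hj⟩ h1 h2 hp hq]
  by_cases hcase : ∀ i : Fin N, j ≤ i.val → i.val < r (k + 1) →
      contrib b g a i ≤ contrib b f a i
  · have := sharp_sub_le b g f a hq.le hqN hcase
    have := hgf (k + 1) hkd
    omega
  · -- Some `i ≥ j` in the block has a contribution of `f` below the maximum, so by dominance the
    -- contributions of `f` at the positions `l < j` of the block are all minimal.
    push Not at hcase
    obtain ⟨i, hji, hiq, hi⟩ := hcase
    have key : ∀ l : Fin N, r k ≤ l.val → l.val < j → contrib b f a l ≤ contrib b g a l := by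
      intro l hl hlj
      have hd := hf k hkd l i hl (by omega) hiq
      have s1 := hsgn l hl (by omega)
      have s2 := hsgn i (by omega) hiq
      have s3 : sgn b ⟨j, hj⟩ = 1 ∨ sgn b ⟨j, hj⟩ = -1 := by
        unfold sgn; split <;> simp
      unfold contrib at hi ⊢
      rw [s1] at hd ⊢
      rw [s2] at hi
      rcases s3 with s3 | s3 <;> rw [s3] at hd hi ⊢ <;> split_ifs at hi ⊢ <;> omega
    have := sharp_sub_le b f g a hp hj.le key
    have := hgf k hkd.le
    omega

/-- Sorting by block index first and by `-(−1)^{b_i} h(i)` second keeps the blocks in place and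
makes each of them weakly dominant. -/
lemma exists_weaklyDominant {N d : ℕ} {b : Fin N → Bool} {r : ℕ → ℕ} (hblock : BlockData N b d r)
    (h : Fin N → ℤ) :
    ∃ x : Equiv.Perm (Fin N), BlockPerm N d r x ∧ WeaklyDominant b d r (h ∘ x) := by
  obtain ⟨t, ht, htk⟩ := exists_blockIndex hblock
  have hc := hblock.2.2.2.1
  have tmono : Monotone t := fun i j hij =>
    (htk j (t i) (ht i).1.le).1 ((ht i).2.1.trans hij)
  let key : Fin N → ℕ ×ₗ ℤ := fun i => toLex (t i, -(sgn b i * h i))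
  have hs : Monotone (key ∘ Tuple.sort key) := Tuple.monotone_sort key
  generalize Tuple.sort key = x at hs
  have hs' : ∀ i j, i ≤ j → t (x i) < t (x j) ∨
      t (x i) = t (x j) ∧ -(sgn b (x i) * h (x i)) ≤ -(sgn b (x j) * h (x j)) :=
    fun i j hij => Prod.Lex.toLex_le_toLex.1 (hs hij)
  have tx : Monotone (t ∘ x) := fun i j hij => by
    rcases hs' i j hij with h1 | h1
    · exact h1.le
    · exact h1.1.le
  -- Both `t` and `t ∘ x` are sorted rearrangements of `t`, so they coincide.
  have teq : t ∘ x = t := Tuple.unique_monotone (σ := x) (τ := 1) tx tmono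
  have teq' : ∀ i, t (x i) = t i := fun i => congrFun teq i
  have tuniq : ∀ k < d, ∀ i : Fin N, r k ≤ i.val → i.val < r (k + 1) → t i = k := by
    intro k hk i h1 h2
    have h3 := (htk i k hk.le).1 h1
    have h4 := (htk i (k + 1) hk).not.1 (by omega)
    omega
  have hx : BlockPerm N d r x := by
    intro k hk i h1 h2
    have h3 := ht (x i)
    rw [teq', tuniq k hk i h1 h2] at h3
    exact h3.2
  refine ⟨x, hx, ?_⟩
  intro k hk i j h1 hij h2
  have hi := hx k hk i h1 (by omega)
  have hj := hx k hk j (by omega) h2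
  have e1 : sgn b (x i) = sgn b i := by
    simp only [sgn, hc k hk (x i) i hi.1 hi.2 h1 (by omega)]
  have e2 : sgn b (x j) = sgn b i := by
    simp only [sgn, hc k hk (x j) i hj.1 hj.2 h1 (by omega)]
  have h3 := hs' i j hij
  rw [teq', teq', tuniq k hk i h1 (by omega), tuniq k hk j (by omega) h2, e1, e2] at h3
  rcases h3 with h3 | h3
  · omega
  · exact neg_le_neg_iff.1 h3.2

/-- If `x ∈ 𝔖^b` is such that `h·x` is weakly dominant on every block, then `h ⪯_b h·x`.
In particular, every `h` admits an upper bound `f` in the Bruhat order such that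
`g·y ⪯_b f` for all `g ⪯_b h` and all `y ∈ 𝔖^b`. -/
theorem bruhatLE_dominate (m n d : ℕ) (b : Fin (m + n) → Bool) (r : ℕ → ℕ)
    (hb : IsZeroOneSeq m n b) (hblock : BlockData (m + n) b d r) :
    (∀ (h : Fin (m + n) → ℤ) (x : Equiv.Perm (Fin (m + n))), BlockPerm (m + n) d r x →
        WeaklyDominant b d r (h ∘ ⇑x) → bruhatLE b h (h ∘ ⇑x)) ∧
    (∀ h : Fin (m + n) → ℤ, ∃ f : Fin (m + n) → ℤ, bruhatLE b h f ∧
        ∀ g : Fin (m + n) → ℤ, bruhatLE b g h →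
          ∀ y : Equiv.Perm (Fin (m + n)), BlockPerm (m + n) d r y → bruhatLE b (g ∘ ⇑y) f) := by
  have h0 : r 0 = 0 := hblock.1
  have inv := fun (h : Fin (m + n) → ℤ) x hx a k hk =>
    sharp_comp_boundary hblock h x hx a (k := k) hk
  have inv0 : ∀ (h : Fin (m + n) → ℤ) x, BlockPerm (m + n) d r x → ∀ a,
      sharp b (h ∘ ⇑x) a 0 = sharp b h a 0 := fun h x hx a => by
    simpa only [h0] using inv h x hx a 0 (Nat.zero_le d)
  have part1 : ∀ (h : Fin (m + n) → ℤ) (x : Equiv.Perm (Fin (m + n))), BlockPerm (m + n) d r x →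
      WeaklyDominant b d r (h ∘ ⇑x) → bruhatLE b h (h ∘ ⇑x) := fun h x hx hdom =>
    ⟨fun a j => sharp_le_of_boundary hblock hdom a (fun k hk => (inv h x hx a k hk).ge) j,
      fun a => (inv0 h x hx a).symm⟩
  refine ⟨part1, fun h => ?_⟩
  obtain ⟨x, hx, hdom⟩ := exists_weaklyDominant hblock h
  refine ⟨h ∘ ⇑x, part1 h x hx hdom, fun g hg y hy => ⟨fun a j => ?_, fun a => ?_⟩⟩
  · refine sharp_le_of_boundary hblock hdom a (fun k hk => ?_) j
    rw [inv g y hy a k hk, inv h x hx a k hk]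
    exact hg.1 a (r k)
  · rw [inv0 g y hy a, inv0 h x hx a]
    exact hg.2 a
end

section
/- For all f, h ∈ ℤ^{m+n}, the set {g ∈ ℤ^{m+n} : g ⪯_b f and −g ⪯_b h} is finite, where (−g)(i) := −g(i). -/
/-!
Choose `A` bounding `|f i|` and `|h i|` for all `i`. Every tail `i ≥ j` is the disjoint union of the
indices with `g i ≤ A` and those with `-g i ≤ -A - 1`, so the corresponding two `♯`-values of `g` and
`-g` add up to the full signed tail sum (`sharp_add_sharp_neg`). The relation `g ⪯ f` bounds the first
summand above by the full tail sum, and `-g ⪯ h` bounds the second above by `0`; hence the second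
one vanishes for every `j`. Subtracting its values at consecutive `j` shows that no single
`g i` exceeds `A` (`le_of_bruhatLE_neg`). The situation is symmetric under `g ↦ -g`, `f ↔ h`, so
`g` lies in the finite box `[-A, A]^(m+n)`.
-/

open Finset

lemma sgn_ne_zero {N : ℕ} (b : Fin N → Bool) (i : Fin N) : sgn b i ≠ 0 := by
  unfold sgn; split_ifs <;> decide

lemma sharp_eq_sum_ite {N : ℕ} (b : Fin N → Bool) (f : Fin N → ℤ) (a : ℤ) (j : ℕ) :
    sharp b f a j = ∑ i, if j ≤ i.val ∧ f i ≤ a then sgn b i else 0 := by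
  rw [sharp, Finset.sum_filter]

lemma sharp_eq_add_succ {N : ℕ} (b : Fin N → Bool) (f : Fin N → ℤ) (a : ℤ) (i : Fin N) :
    sharp b f a i.val = (if f i ≤ a then sgn b i else 0) + sharp b f a (i.val + 1) := by
  have hi : (if f i ≤ a then sgn b i else 0)
      = ∑ k, if k = i then (if f k ≤ a then sgn b k else 0) else 0 := by simp
  rw [hi, sharp_eq_sum_ite, sharp_eq_sum_ite, ← Finset.sum_add_distrib]
  refine Finset.sum_congr rfl fun k _ => ?_
  have hk : k = i ↔ k.val = i.val := Fin.ext_iff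
  split_ifs <;> omega

lemma sharp_of_forall_lt {N : ℕ} (b : Fin N → Bool) (f : Fin N → ℤ) (a : ℤ) (j : ℕ)
    (hf : ∀ i, a < f i) : sharp b f a j = 0 := by
  rw [sharp_eq_sum_ite]
  exact Finset.sum_eq_zero fun i _ => if_neg fun hi => absurd hi.2 (not_le.2 (hf i))

/-- The indices with `g i ≤ A` and those with `g i > A`, the latter written as `-g i ≤ -A - 1`,
partition each tail. The full tail sum is expressed as a `♯`-value of any `f` bounded by `A`. -/
lemma sharp_add_sharp_neg {N : ℕ} (b : Fin N → Bool) (g f : Fin N → ℤ) (A : ℤ) (j : ℕ)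
    (hf : ∀ i, f i ≤ A) : sharp b g A j + sharp b (-g) (-A - 1) j = sharp b f A j := by
  simp only [sharp_eq_sum_ite, ← Finset.sum_add_distrib]
  refine Finset.sum_congr rfl fun i _ => ?_
  have := hf i
  simp only [Pi.neg_apply]
  split_ifs <;> omega

lemma le_of_bruhatLE_neg {N : ℕ} {b : Fin N → Bool} {g f h : Fin N → ℤ} {A : ℤ}
    (hgf : bruhatLE b g f) (hgh : bruhatLE b (-g) h)
    (hf : ∀ i, f i ≤ A) (hh : ∀ i, -A ≤ h i) (i : Fin N) : g i ≤ A := by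
  have hzero : ∀ j, sharp b (-g) (-A - 1) j = 0 := by
    intro j
    have h1 := hgf.1 A j
    have h2 := hgh.1 (-A - 1) j
    rw [sharp_of_forall_lt b h (-A - 1) j (fun k => by linarith [hh k])] at h2
    have h3 := sharp_add_sharp_neg b g f A j hf
    linarith
  by_contra hlt
  have hstep := sharp_eq_add_succ b (-g) (-A - 1) i
  rw [hzero, hzero, if_pos (by simp only [Pi.neg_apply]; omega)] at hstep
  exact sgn_ne_zero b i (by linarith)

/-- For all `f, h`, the set `{g : g ⪯_b f and −g ⪯_b h}` is finite. -/
theorem bruhatLE_neg_finite (m n : ℕ) (b : Fin (m + n) → Bool) (hb : IsZeroOneSeq m n b)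
    (f h : Fin (m + n) → ℤ) :
    {g : Fin (m + n) → ℤ | bruhatLE b g f ∧ bruhatLE b (-g) h}.Finite := by
  obtain ⟨A, hA⟩ : ∃ A : ℤ, ∀ i, |f i| ≤ A ∧ |h i| ≤ A := by
    refine ⟨∑ i, (|f i| + |h i|), fun i => ?_⟩
    have hi := Finset.single_le_sum (f := fun i => |f i| + |h i|)
      (fun k _ => by positivity) (Finset.mem_univ i)
    constructor <;> linarith [abs_nonneg (f i), abs_nonneg (h i)]
  refine (Set.finite_Icc (fun _ => -A : Fin (m + n) → ℤ) (fun _ => A)).subset ?_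
  rintro g ⟨hgf, hgh⟩
  have hup := le_of_bruhatLE_neg hgf hgh (fun i => (abs_le.1 (hA i).1).2)
    (fun i => (abs_le.1 (hA i).2).1)
  have hlow := le_of_bruhatLE_neg hgh (by rwa [neg_neg]) (fun i => (abs_le.1 (hA i).2).2)
    (fun i => (abs_le.1 (hA i).1).1)
  exact ⟨fun i => neg_le.1 (hlow i), hup⟩
end

section
/- Let f ∈ ℤ^{m+n} and let x be the unique element of minimal length in 𝔖^b such that f·x is b-antidominant. Then M_f H_0 = (−q)^{ℓ(x)} K_{f·x·w_0} if f·x·w_0 ∈ ℤ^{b,+}, and M_f H_0 = 0 otherwise. -/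
/-!
The identity rests on the eigenvector property `H_i H_0 = -q H_0` for interior `i`, with operators
composing from left to right (`sum_mul_HopN`, `H0_mul_HopN`). Applied to `M_f` it gives
`M_{f·s_i} H_0 = -q M_f H_0` when `c f(i) < c f(i+1)`, where `c = (-1)^{b_i}`, and
`q⁻¹ M_f H_0 = -q M_f H_0`, hence `M_f H_0 = 0`, when `f(i) = f(i+1)`.

Let `g = f·x`, so that `f = g·x⁻¹`. If `g` is strictly antidominant, building `x` up by left
multiplications with simple transpositions that increase the length turns the first rule into
`M_f H_0 = (-q)^{ℓ(x)} M_g H_0` (`single_comp_inv`), and `M_g H_0` is `K_{g·w_0}` because `w_0` is an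
involution. Otherwise `g` takes equal values at two neighbouring positions of a block, so
`M_g H_0 = 0`, and this vanishing propagates along the `𝔖^b`-orbit (`single_comp_inv_zero`). The
two cases match the dichotomy in the statement since `g·w_0` is dominant exactly when `g` is
strictly antidominant.

For `H_i H_0 = -q H_0` one pairs `w` with `s_i w`, which requires `H_{s_i w} = H_i H_w` whenever
`ℓ(s_i w) > ℓ(w)`. As `Hw` is defined through an arbitrarily chosen reduced word, this needs the
independence of `H_w` from that word, i.e. Matsumoto's theorem (`matsumoto`). It is proved from the
commutation and braid relations of the `H_i` (`HopN_comm`, `HopN_braid`) and from the description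
of the length `blen` as a number of inversions (`blen_eq`).
-/

open Finset

noncomputable section

abbrev Tsp (N : ℕ) : Type := (Fin N → ℤ) →₀ RatFunc ℚ

def qq : RatFunc ℚ := RatFunc.X

def Interior (N : ℕ) (b : Fin N → Bool) (i : ℕ) : Prop :=
  ∃ (h1 : i < N) (h2 : i + 1 < N), b ⟨i, h1⟩ = b ⟨i + 1, h2⟩

def HM {N : ℕ} (b : Fin N → Bool) (i : ℕ) (f : Fin N → ℤ) : Tsp N :=
  if h : i + 1 < N then
    let i0 : Fin N := ⟨i, Nat.lt_of_succ_lt h⟩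
    let i1 : Fin N := ⟨i + 1, h⟩
    if f i0 = f i1 then qq⁻¹ • Finsupp.single f 1
    else if sgn b i0 * f i0 < sgn b i0 * f i1 then
      Finsupp.single (f ∘ ⇑(Equiv.swap i0 i1)) 1
    else
      Finsupp.single (f ∘ ⇑(Equiv.swap i0 i1)) 1 - (qq - qq⁻¹) • Finsupp.single f 1
  else Finsupp.single f 1

def HopN {N : ℕ} (b : Fin N → Bool) (i : ℕ) : Module.End (RatFunc ℚ) (Tsp N) :=
  Finsupp.lsum (RatFunc ℚ) fun f => LinearMap.toSpanSingleton (RatFunc ℚ) (Tsp N) (HM b i f)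

def swapPerm (N i : ℕ) : Equiv.Perm (Fin N) :=
  if h : i + 1 < N then Equiv.swap ⟨i, Nat.lt_of_succ_lt h⟩ ⟨i + 1, h⟩ else 1

def wordProd (N : ℕ) (l : List ℕ) : Equiv.Perm (Fin N) := (l.map (swapPerm N)).prod

def Hword {N : ℕ} (b : Fin N → Bool) (l : List ℕ) : Module.End (RatFunc ℚ) (Tsp N) :=
  ((l.map (HopN b)).reverse).prod

def blen {N : ℕ} (b : Fin N → Bool) (w : Equiv.Perm (Fin N)) : ℕ :=
  sInf {k | ∃ l : List ℕ, (∀ i ∈ l, Interior N b i) ∧ wordProd N l = w ∧ l.length = k}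

def IsReducedWord {N : ℕ} (b : Fin N → Bool) (w : Equiv.Perm (Fin N)) (l : List ℕ) : Prop :=
  (∀ i ∈ l, Interior N b i) ∧ wordProd N l = w ∧ l.length = blen b w

open scoped Classical in
def Hw {N : ℕ} (b : Fin N → Bool) (w : Equiv.Perm (Fin N)) : Module.End (RatFunc ℚ) (Tsp N) :=
  if h : ∃ l : List ℕ, IsReducedWord b w l then Hword b h.choose else 0

def IsW0 (N : ℕ) (d : ℕ) (r : ℕ → ℕ) (w0 : Equiv.Perm (Fin N)) : Prop :=
  ∀ k < d, ∀ i : Fin N, r k ≤ i.val → i.val < r (k + 1) →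
    ((w0 i).val) = r k + r (k + 1) - 1 - i.val

def Dominant {N : ℕ} (b : Fin N → Bool) (d : ℕ) (r : ℕ → ℕ) (f : Fin N → ℤ) : Prop :=
  ∀ k < d, ∀ i j : Fin N, r k ≤ i.val → i.val < j.val → j.val < r (k + 1) →
    sgn b i * f j < sgn b i * f i

def Antidominant {N : ℕ} (b : Fin N → Bool) (d : ℕ) (r : ℕ → ℕ) (f : Fin N → ℤ) : Prop :=
  ∀ k < d, ∀ i j : Fin N, r k ≤ i.val → i.val < j.val → j.val < r (k + 1) →
    sgn b i * f i ≤ sgn b i * f j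

def StrictAntidominant {N : ℕ} (b : Fin N → Bool) (d : ℕ) (r : ℕ → ℕ) (f : Fin N → ℤ) : Prop :=
  ∀ k < d, ∀ i j : Fin N, r k ≤ i.val → i.val < j.val → j.val < r (k + 1) →
    sgn b i * f i < sgn b i * f j

open scoped Classical in
def H0 {N : ℕ} (b : Fin N → Bool) (d : ℕ) (r : ℕ → ℕ) (w0 : Equiv.Perm (Fin N)) :
    Module.End (RatFunc ℚ) (Tsp N) :=
  ∑ w ∈ Finset.univ.filter (fun x : Equiv.Perm (Fin N) => BlockPerm N d r x),
    ((-qq) ^ ((blen b w : ℤ) - (blen b w0 : ℤ))) • Hw b w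

def Kel {N : ℕ} (b : Fin N → Bool) (d : ℕ) (r : ℕ → ℕ) (w0 : Equiv.Perm (Fin N))
    (f : Fin N → ℤ) : Tsp N :=
  H0 b d r w0 (Finsupp.single (f ∘ ⇑w0) 1)

def qint (k : ℕ) : RatFunc ℚ := (qq ^ (k : ℤ) - qq ^ (-(k : ℤ))) / (qq - qq⁻¹)

def qfact : ℕ → RatFunc ℚ
  | 0 => 1
  | k + 1 => qfact k * qint (k + 1)

def bform {N : ℕ} (u v : Tsp N) : RatFunc ℚ := u.sum fun f c => c * v f

def sigmaMap {N : ℕ} (bar : RatFunc ℚ →+* RatFunc ℚ) (u : Tsp N) : Tsp N :=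
  u.sum fun f c => Finsupp.single (-f) (bar c)

def HactFun {N : ℕ} (b : Fin N → Bool) (i : ℕ) (u : (Fin N → ℤ) → RatFunc ℚ) :
    (Fin N → ℤ) → RatFunc ℚ := fun h =>
  if hlt : i + 1 < N then
    let i0 : Fin N := ⟨i, Nat.lt_of_succ_lt hlt⟩
    let i1 : Fin N := ⟨i + 1, hlt⟩
    if h i0 = h i1 then qq⁻¹ * u h
    else if sgn b i0 * h i0 < sgn b i0 * h i1 then u (h ∘ ⇑(Equiv.swap i0 i1))
    else u (h ∘ ⇑(Equiv.swap i0 i1)) - (qq - qq⁻¹) * u h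
  else u h


/-! ### Inversions and words in simple transpositions -/

/-- The number of inversions of `v`, i.e. of pairs `p < q` with `v q < v p`. -/
def invCount {N : ℕ} (v : Equiv.Perm (Fin N)) : ℕ :=
  (univ.filter fun p : Fin N × Fin N => p.1 < p.2 ∧ v p.2 < v p.1).card

theorem swapPerm_of_lt {N i : ℕ} (h : i + 1 < N) :
    swapPerm N i = Equiv.swap ⟨i, Nat.lt_of_succ_lt h⟩ ⟨i + 1, h⟩ := by
  simp [swapPerm, h]

theorem swapPerm_mul_self (N i : ℕ) : swapPerm N i * swapPerm N i = 1 := by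
  unfold swapPerm; split_ifs <;> simp

theorem swapPerm_inv (N i : ℕ) : (swapPerm N i)⁻¹ = swapPerm N i :=
  inv_eq_of_mul_eq_one_left (swapPerm_mul_self N i)

theorem swapPerm_apply_apply (N i : ℕ) (p : Fin N) : swapPerm N i (swapPerm N i p) = p := by
  rw [← Equiv.Perm.mul_apply, swapPerm_mul_self]; rfl

theorem swapPerm_left {N i : ℕ} (h : i + 1 < N) :
    swapPerm N i ⟨i, Nat.lt_of_succ_lt h⟩ = ⟨i + 1, h⟩ := by
  rw [swapPerm_of_lt h, Equiv.swap_apply_left]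

theorem swapPerm_right {N i : ℕ} (h : i + 1 < N) :
    swapPerm N i ⟨i + 1, h⟩ = ⟨i, Nat.lt_of_succ_lt h⟩ := by
  rw [swapPerm_of_lt h, Equiv.swap_apply_right]

theorem swapPerm_of_ne {N i : ℕ} (p : Fin N) (h1 : p.val ≠ i) (h2 : p.val ≠ i + 1) :
    swapPerm N i p = p := by
  unfold swapPerm; split_ifs
  · exact Equiv.swap_apply_of_ne_of_ne (fun h => h1 (by simp [h])) (fun h => h2 (by simp [h]))
  · rfl

/-- A simple transposition preserves the order of every pair except the one it exchanges. -/
theorem swapPerm_lt {N i : ℕ} {p q : Fin N} (hpq : p < q)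
    (hne : ¬ (p.val = i ∧ q.val = i + 1)) : swapPerm N i p < swapPerm N i q := by
  unfold swapPerm
  split_ifs with h
  · simp only [Equiv.swap_apply_def, Fin.ext_iff, Fin.lt_def] at *
    split_ifs <;> grind
  · exact hpq

theorem invCount_one {N : ℕ} : invCount (1 : Equiv.Perm (Fin N)) = 0 := by
  unfold invCount
  rw [card_eq_zero, filter_eq_empty_iff]
  rintro p - ⟨h1, h2⟩
  exact lt_asymm h1 h2

theorem invCount_mul_swap {N i : ℕ} (h : i + 1 < N) (v : Equiv.Perm (Fin N))
    (hv : v ⟨i, Nat.lt_of_succ_lt h⟩ < v ⟨i + 1, h⟩) :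
    invCount (v * swapPerm N i) = invCount v + 1 := by
  classical
  set s := swapPerm N i with hs
  have hss : ∀ p, s (s p) = p := swapPerm_apply_apply N i
  have key : (univ.filter fun p : Fin N × Fin N => p.1 < p.2 ∧ (v * s) p.2 < (v * s) p.1) =
      insert (⟨i, Nat.lt_of_succ_lt h⟩, ⟨i + 1, h⟩)
        ((univ.filter fun p : Fin N × Fin N => p.1 < p.2 ∧ v p.2 < v p.1).image
          (Prod.map s s)) := by
    ext ⟨p, q⟩
    simp only [mem_filter, mem_univ, true_and, mem_insert, mem_image, Prod.exists,
      Prod.map_apply, Prod.mk.injEq]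
    constructor
    · rintro ⟨hpq, hinv⟩
      by_cases hc : p.val = i ∧ q.val = i + 1
      · left; exact ⟨Fin.ext hc.1, Fin.ext hc.2⟩
      · right; exact ⟨s p, s q, ⟨swapPerm_lt hpq hc, hinv⟩, hss p, hss q⟩
    · rintro (⟨rfl, rfl⟩ | ⟨p', q', ⟨hlt, hinv⟩, rfl, rfl⟩)
      · refine ⟨by simp [Fin.lt_def], ?_⟩
        change v (s _) < v (s _)
        rw [hs, swapPerm_left h, swapPerm_right h]; exact hv
      · refine ⟨swapPerm_lt hlt ?_, ?_⟩
        swap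
        · change v (s (s _)) < v (s (s _))
          rwa [hss, hss]
        rintro ⟨h1, h2⟩
        have e1 : p' = ⟨i, Nat.lt_of_succ_lt h⟩ := Fin.ext h1
        have e2 : q' = ⟨i + 1, h⟩ := Fin.ext h2
        subst e1 e2
        exact lt_asymm hv hinv
  unfold invCount
  rw [key, card_insert_of_notMem, card_image_of_injective]
  · exact Function.Injective.prodMap s.injective s.injective
  · simp only [mem_image, mem_filter, mem_univ, true_and, Prod.exists, Prod.map_apply,
      Prod.mk.injEq, not_exists, not_and]
    rintro p q ⟨hlt, -⟩ h1 h2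
    have e1 := hss p
    have e2 := hss q
    rw [h1, hs, swapPerm_left h] at e1
    rw [h2, hs, swapPerm_right h] at e2
    subst e1 e2
    simp [Fin.lt_def] at hlt

/-- The length of `w`, computed as the number of inversions of `w⁻¹`; the inverse makes left
multiplication by a simple transposition act on positions. -/
def permLen {N : ℕ} (w : Equiv.Perm (Fin N)) : ℕ := invCount w⁻¹

theorem permLen_one {N : ℕ} : permLen (1 : Equiv.Perm (Fin N)) = 0 := by
  simp [permLen, invCount_one]

/-- `i` is a left ascent of `w`: `w⁻¹ i < w⁻¹ (i+1)`. -/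
def Asc {N : ℕ} (w : Equiv.Perm (Fin N)) (i : ℕ) (h : i + 1 < N) : Prop :=
  w⁻¹ ⟨i, Nat.lt_of_succ_lt h⟩ < w⁻¹ ⟨i + 1, h⟩

theorem permLen_swap_mul {N i : ℕ} (h : i + 1 < N) (w : Equiv.Perm (Fin N)) (hw : Asc w i h) :
    permLen (swapPerm N i * w) = permLen w + 1 := by
  unfold permLen
  rw [mul_inv_rev, swapPerm_inv]
  exact invCount_mul_swap h _ hw

theorem swap_mul_cancel {N : ℕ} (i : ℕ) (w : Equiv.Perm (Fin N)) :
    swapPerm N i * (swapPerm N i * w) = w := by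
  rw [← mul_assoc, swapPerm_mul_self, one_mul]

theorem swap_mul_inv_apply {N : ℕ} (i : ℕ) (w : Equiv.Perm (Fin N)) (p : Fin N) :
    (swapPerm N i * w)⁻¹ p = w⁻¹ (swapPerm N i p) := by
  rw [mul_inv_rev, swapPerm_inv]; rfl

theorem asc_swap_mul {N i : ℕ} (h : i + 1 < N) (w : Equiv.Perm (Fin N)) :
    Asc (swapPerm N i * w) i h ↔ ¬ Asc w i h := by
  unfold Asc
  rw [swap_mul_inv_apply, swap_mul_inv_apply, swapPerm_left h, swapPerm_right h, not_lt]
  refine ⟨le_of_lt, fun hle => lt_of_le_of_ne hle ?_⟩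
  intro he
  have := w⁻¹.injective he
  simp [Fin.ext_iff] at this

theorem permLen_of_not_asc {N i : ℕ} (h : i + 1 < N) (w : Equiv.Perm (Fin N))
    (hw : ¬ Asc w i h) : permLen w = permLen (swapPerm N i * w) + 1 := by
  have := permLen_swap_mul h _ ((asc_swap_mul h w).2 hw)
  rwa [swap_mul_cancel] at this

theorem permLen_swap_mul_le {N : ℕ} (i : ℕ) (w : Equiv.Perm (Fin N)) :
    permLen (swapPerm N i * w) ≤ permLen w + 1 := by
  by_cases h : i + 1 < N
  · by_cases hw : Asc w i h
    · exact (permLen_swap_mul h w hw).le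
    · have := permLen_of_not_asc h w hw; omega
  · simp [swapPerm, h]

theorem wordProd_cons (N i : ℕ) (l : List ℕ) :
    wordProd N (i :: l) = swapPerm N i * wordProd N l := by
  simp [wordProd]

theorem permLen_wordProd_le (N : ℕ) (l : List ℕ) : permLen (wordProd N l) ≤ l.length := by
  induction l with
  | nil => simp [wordProd, permLen_one]
  | cons i l ih =>
    rw [wordProd_cons, List.length_cons]
    exact (permLen_swap_mul_le i _).trans (by omega)

/-! ### The parabolic subgroup attached to a block function -/

/-- `β` is a block function for `b`: it is monotone, and the interior indices are exactly those
whose successor lies in the same block. -/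
def IsBlockFun {N : ℕ} (b : Fin N → Bool) (β : Fin N → ℕ) : Prop :=
  Monotone β ∧ ∀ (i : ℕ) (h : i + 1 < N),
    Interior N b i ↔ β ⟨i, Nat.lt_of_succ_lt h⟩ = β ⟨i + 1, h⟩

/-- The group `𝔖^b` of permutations preserving every fibre of the block function `β`. -/
def blockSub {N : ℕ} (β : Fin N → ℕ) : Subgroup (Equiv.Perm (Fin N)) where
  carrier := {w | ∀ i, β (w i) = β i}
  one_mem' := fun _ => rfl
  mul_mem' := fun {v w} hv hw i => by
    rw [Equiv.Perm.mul_apply, hv, hw]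
  inv_mem' := fun {w} hw i => by
    have := hw (w⁻¹ i)
    rw [← Equiv.Perm.mul_apply, mul_inv_cancel] at this
    exact this.symm

theorem mem_blockSub {N : ℕ} {β : Fin N → ℕ} {w : Equiv.Perm (Fin N)} :
    w ∈ blockSub β ↔ ∀ i, β (w i) = β i := Iff.rfl

theorem Interior.lt {N : ℕ} {b : Fin N → Bool} {i : ℕ} (hi : Interior N b i) : i + 1 < N :=
  hi.2.1

section Words

variable {N : ℕ} {b : Fin N → Bool} {β : Fin N → ℕ}

theorem swapPerm_mem (hβ : IsBlockFun b β) {i : ℕ} (hi : Interior N b i) :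
    swapPerm N i ∈ blockSub β := by
  intro p
  have he := (hβ.2 i hi.lt).1 hi
  by_cases h1 : p.val = i
  · have : p = ⟨i, Nat.lt_of_succ_lt hi.lt⟩ := Fin.ext h1
    rw [this, swapPerm_left hi.lt, he]
  · by_cases h2 : p.val = i + 1
    · have : p = ⟨i + 1, hi.lt⟩ := Fin.ext h2
      rw [this, swapPerm_right hi.lt, he]
    · rw [swapPerm_of_ne p h1 h2]

theorem wordProd_mem (hβ : IsBlockFun b β) {l : List ℕ} (hl : ∀ i ∈ l, Interior N b i) :
    wordProd N l ∈ blockSub β := by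
  induction l with
  | nil => simp [wordProd]
  | cons i l ih =>
    rw [wordProd_cons]
    exact mul_mem (swapPerm_mem hβ (hl i (by simp))) (ih fun j hj => hl j (by simp [hj]))

/-- A nontrivial element of `𝔖^b` has an interior left descent: at non-interior indices `w⁻¹`
increases automatically, and a permutation increasing everywhere is the identity. -/
theorem exists_descent (hβ : IsBlockFun b β) {w : Equiv.Perm (Fin N)} (hw : w ∈ blockSub β)
    (hne : w ≠ 1) : ∃ (i : ℕ) (hi : Interior N b i), ¬ Asc w i hi.lt := by
  by_contra! hall
  apply hne
  have hw' : w⁻¹ ∈ blockSub β := inv_mem hw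
  have hstep : ∀ (i : ℕ) (h : i + 1 < N), Asc w i h := by
    intro i h
    by_cases hi : Interior N b i
    · exact hall i hi
    · rw [hβ.2 i h] at hi
      have hle : β ⟨i, Nat.lt_of_succ_lt h⟩ ≤ β ⟨i + 1, h⟩ := hβ.1 (by simp [Fin.le_def])
      unfold Asc
      by_contra hcon
      have := hβ.1 (not_lt.1 hcon)
      rw [hw', hw'] at this
      omega
  have hmono : StrictMono (w⁻¹ : Equiv.Perm (Fin N)) := by
    cases N with
    | zero => intro i; exact i.elim0
    | succ k =>
      rw [Fin.strictMono_iff_lt_succ]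
      intro i
      exact hstep i.val (by omega)
  have : ∀ p, w⁻¹ p = p := by
    intro p
    have := Subsingleton.elim (StrictMono.orderIsoOfSurjective _ hmono w⁻¹.surjective) (OrderIso.refl _)
    exact congrArg (fun e : Fin N ≃o Fin N => e p) this
  have h1 : w⁻¹ = 1 := Equiv.ext this
  exact inv_eq_one.1 h1

theorem exists_word (hβ : IsBlockFun b β) : ∀ (n : ℕ) (w : Equiv.Perm (Fin N)),
    w ∈ blockSub β → permLen w = n →
    ∃ l : List ℕ, (∀ i ∈ l, Interior N b i) ∧ wordProd N l = w ∧ l.length = n := by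
  intro n
  induction n with
  | zero =>
    intro w hw h0
    have : w = 1 := by
      by_contra hne
      obtain ⟨i, hi, hd⟩ := exists_descent hβ hw hne
      have := permLen_of_not_asc hi.lt w hd
      omega
    exact ⟨[], by simp, by simp [wordProd, this], rfl⟩
  | succ n ih =>
    intro w hw hn
    have hne : w ≠ 1 := by
      rintro rfl
      rw [permLen_one] at hn
      omega
    obtain ⟨i, hi, hd⟩ := exists_descent hβ hw hne
    have := permLen_of_not_asc hi.lt w hd
    obtain ⟨l, h1, h2, h3⟩ := ih (swapPerm N i * w) (mul_mem (swapPerm_mem hβ hi) hw) (by omega)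
    refine ⟨i :: l, ?_, ?_, by simp [h3]⟩
    · intro j hj
      rcases List.mem_cons.1 hj with rfl | hj
      · exact hi
      · exact h1 j hj
    · rw [wordProd_cons, h2, swap_mul_cancel]

theorem blen_eq (hβ : IsBlockFun b β) {w : Equiv.Perm (Fin N)} (hw : w ∈ blockSub β) :
    blen b w = permLen w := by
  unfold blen
  apply le_antisymm
  · exact Nat.sInf_le (exists_word hβ _ w hw rfl)
  · refine le_csInf ⟨_, exists_word hβ _ w hw rfl⟩ ?_
    rintro k ⟨l, -, rfl, rfl⟩
    exact permLen_wordProd_le N l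

end Words

/-! ### Quadratic, commutation and braid relations -/

theorem qq_ne_zero : qq ≠ 0 := RatFunc.X_ne_zero

theorem HopN_single {N : ℕ} (b : Fin N → Bool) (i : ℕ) (f : Fin N → ℤ) :
    HopN b i (Finsupp.single f 1) = HM b i f := by
  simp [HopN]

theorem sgn_mul_inj {N : ℕ} (b : Fin N → Bool) (i : Fin N) {x y : ℤ} :
    sgn b i * x = sgn b i * y ↔ x = y := by
  unfold sgn; split_ifs <;> simp

/-- The three rules defining an operator `A` of Hecke type with parameter `q` on vectors `e f`
indexed by functions `f`; it compares the values of `f` at `x` and `y`, scaled by the sign `c`. -/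
structure HeckeRule {K V : Type*} [Field K] [AddCommGroup V] [Module K V] {N : ℕ} (q : K)
    (e : (Fin N → ℤ) → V) (A : Module.End K V) (c : ℤ) (x y : Fin N) : Prop where
  lt : ∀ f : Fin N → ℤ, c * f x < c * f y → A (e f) = e (f ∘ ⇑(Equiv.swap x y))
  eq : ∀ f : Fin N → ℤ, c * f x = c * f y → A (e f) = q⁻¹ • e f
  gt : ∀ f : Fin N → ℤ, c * f y < c * f x →
    A (e f) = e (f ∘ ⇑(Equiv.swap x y)) - (q - q⁻¹) • e f

/-- The standard basis vector `M_f`. -/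
abbrev stdBasis {N : ℕ} (f : Fin N → ℤ) : Tsp N := Finsupp.single f 1

theorem end_ext {N : ℕ} {A B : Module.End (RatFunc ℚ) (Tsp N)}
    (h : ∀ f, A (stdBasis f) = B (stdBasis f)) : A = B :=
  Finsupp.lhom_ext' fun f => LinearMap.ext_ring (h f)

theorem heckeRule_HopN {N : ℕ} (b : Fin N → Bool) {i : ℕ} (h : i + 1 < N) :
    HeckeRule qq stdBasis (HopN b i) (sgn b ⟨i, Nat.lt_of_succ_lt h⟩)
      ⟨i, Nat.lt_of_succ_lt h⟩ ⟨i + 1, h⟩ := by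
  refine ⟨fun f hf => ?_, fun f hf => ?_, fun f hf => ?_⟩ <;> rw [HopN_single] <;>
    simp only [HM, h, dif_pos]
  · rw [if_neg (fun he => hf.ne (by rw [he])), if_pos hf]
  · rw [if_pos ((sgn_mul_inj b _).1 hf)]
  · rw [if_neg (fun he => hf.ne (by rw [he])), if_neg hf.not_gt]

theorem comp_swap_swap {N : ℕ} (f : Fin N → ℤ) (x y : Fin N) :
    (f ∘ ⇑(Equiv.swap x y)) ∘ ⇑(Equiv.swap x y) = f := by
  ext p; simp

theorem HeckeRule.quadratic {K V : Type*} [Field K] [AddCommGroup V]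
    [Module K V] {N : ℕ} {q : K} {e : (Fin N → ℤ) → V} {A : Module.End K V} {c : ℤ} {x y : Fin N}
    (hA : HeckeRule q e A c x y) (hq : q ≠ 0) (f : Fin N → ℤ) :
    A (A (e f)) = e f - (q - q⁻¹) • A (e f) := by
  rcases lt_trichotomy (c * f x) (c * f y) with h | h | h
  · rw [hA.lt f h, hA.gt _ (by simpa using h), comp_swap_swap]
  · rw [hA.eq f h, map_smul, hA.eq f h]
    match_scalars
    field_simp
    ring
  · rw [hA.gt f h, map_sub, map_smul, hA.lt _ (by simpa using h), comp_swap_swap, hA.gt f h]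

theorem HeckeRule.comm {K V : Type*} [Field K] [AddCommGroup V]
    [Module K V] {N : ℕ} {q : K} {e : (Fin N → ℤ) → V} {A B : Module.End K V} {c c' : ℤ}
    {x y x' y' : Fin N} (hA : HeckeRule q e A c x y) (hB : HeckeRule q e B c' x' y')
    (h1 : x ≠ x') (h2 : x ≠ y') (h3 : y ≠ x') (h4 : y ≠ y')
    (f : Fin N → ℤ) : A (B (e f)) = B (A (e f)) := by
  set σ := Equiv.swap x y with hσ
  set τ := Equiv.swap x' y' with hτ
  have e1 : σ x' = x' := Equiv.swap_apply_of_ne_of_ne h1.symm h3.symm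
  have e2 : σ y' = y' := Equiv.swap_apply_of_ne_of_ne h2.symm h4.symm
  have e3 : τ x = x := Equiv.swap_apply_of_ne_of_ne h1 h2
  have e4 : τ y = y := Equiv.swap_apply_of_ne_of_ne h3 h4
  have hc : (f ∘ ⇑σ) ∘ ⇑τ = (f ∘ ⇑τ) ∘ ⇑σ := by
    ext p
    simp only [Function.comp_apply, hσ, hτ, Equiv.swap_apply_def]
    congr 1
    split_ifs <;> simp_all
  have At := hA.lt
  have Ae := hA.eq
  have Ag := hA.gt
  have Bt := hB.lt
  have Be := hB.eq
  have Bg := hB.gt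
  rw [← hσ] at At Ag
  rw [← hτ] at Bt Bg
  rcases lt_trichotomy (c * f x) (c * f y) with h | h | h <;>
  rcases lt_trichotomy (c' * f x') (c' * f y') with h' | h' | h' <;>
  simp only [At, Ae, Ag, Bt, Be, Bg, h, h', e1, e2, e3, e4, hc, map_sub, map_smul,
    Function.comp_apply] <;>
  module

set_option maxHeartbeats 4000000 in
/-- The braid relation, verified separately for each of the thirteen relative orders of the values
of `f` at `x`, `y`, `z`. -/
theorem HeckeRule.braid {K V : Type*} [Field K] [AddCommGroup V]
    [Module K V] {N : ℕ} {q : K} {e : (Fin N → ℤ) → V} {A B : Module.End K V} {c : ℤ}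
    {x y z : Fin N} (hA : HeckeRule q e A c x y) (hB : HeckeRule q e B c y z)
    (hxy : x ≠ y) (hyz : y ≠ z) (hxz : x ≠ z) (hq : q ≠ 0)
    (f : Fin N → ℤ) : A (B (A (e f))) = B (A (B (e f))) := by
  set σ := Equiv.swap x y with hσ
  set τ := Equiv.swap y z with hτ
  have e1 : σ x = y := Equiv.swap_apply_left x y
  have e2 : σ y = x := Equiv.swap_apply_right x y
  have e3 : σ z = z := Equiv.swap_apply_of_ne_of_ne hxz.symm hyz.symm
  have e4 : τ x = x := Equiv.swap_apply_of_ne_of_ne hxy hxz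
  have e5 : τ y = z := Equiv.swap_apply_left y z
  have e6 : τ z = y := Equiv.swap_apply_right y z
  have hss : ∀ g : Fin N → ℤ, (g ∘ ⇑σ) ∘ ⇑σ = g := fun g => comp_swap_swap g x y
  have htt : ∀ g : Fin N → ℤ, (g ∘ ⇑τ) ∘ ⇑τ = g := fun g => comp_swap_swap g y z
  have hc : ((f ∘ ⇑σ) ∘ ⇑τ) ∘ ⇑σ = ((f ∘ ⇑τ) ∘ ⇑σ) ∘ ⇑τ := by
    ext p
    simp only [Function.comp_apply, hσ, hτ, Equiv.swap_apply_def]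
    congr 1
    split_ifs <;> simp_all
  have At := hA.lt
  have Ae := hA.eq
  have Ag := hA.gt
  have Bt := hB.lt
  have Be := hB.eq
  have Bg := hB.gt
  rw [← hσ] at At Ag
  rw [← hτ] at Bt Bg
  rcases lt_trichotomy (c * f x) (c * f y) with h | h | h <;>
  rcases lt_trichotomy (c * f y) (c * f z) with h' | h' | h' <;>
  rcases lt_trichotomy (c * f x) (c * f z) with h'' | h'' | h'' <;>
  first
  | (exfalso; omega)
  | (simp only [At, Ae, Ag, Bt, Be, Bg, h, h', h'', e1, e2, e3, e4, e5, e6, hc, hss, htt,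
      map_sub, map_smul, Function.comp_apply] <;>
     match_scalars <;> field_simp <;> ring)

theorem HopN_quadratic {N : ℕ} {b : Fin N → Bool} {i : ℕ} (hi : Interior N b i) :
    HopN b i * HopN b i = 1 - (qq - qq⁻¹) • HopN b i :=
  end_ext fun f => (heckeRule_HopN b hi.lt).quadratic qq_ne_zero f

theorem HopN_comm {N : ℕ} {b : Fin N → Bool} {i j : ℕ} (hi : Interior N b i)
    (hj : Interior N b j) (hij : i + 1 < j) : HopN b i * HopN b j = HopN b j * HopN b i := by
  refine end_ext fun f => (heckeRule_HopN b hi.lt).comm (heckeRule_HopN b hj.lt) ?_ ?_ ?_ ?_ f <;>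
    simp only [ne_eq, Fin.mk.injEq] <;> omega

theorem HopN_braid {N : ℕ} {b : Fin N → Bool} {i : ℕ} (hi : Interior N b i)
    (hj : Interior N b (i + 1)) :
    HopN b i * HopN b (i + 1) * HopN b i = HopN b (i + 1) * HopN b i * HopN b (i + 1) := by
  have hs : sgn b ⟨i, Nat.lt_of_succ_lt hi.lt⟩ = sgn b ⟨i + 1, hi.lt⟩ := by
    obtain ⟨_, _, h⟩ := hi
    simp only [sgn, h]
  have hA := heckeRule_HopN b hi.lt
  rw [hs] at hA
  refine end_ext fun f => hA.braid (heckeRule_HopN b hj.lt) ?_ ?_ ?_ qq_ne_zero f <;>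
    simp only [ne_eq, Fin.mk.injEq] <;> omega

/-! ### Independence of the reduced word -/

theorem Hword_cons {N : ℕ} (b : Fin N → Bool) (i : ℕ) (l : List ℕ) :
    Hword b (i :: l) = Hword b l * HopN b i := by
  simp [Hword]

theorem swapPerm_comm {N i j : ℕ} (hij : i + 1 < j) :
    swapPerm N i * swapPerm N j = swapPerm N j * swapPerm N i := by
  ext p
  simp only [Equiv.Perm.mul_apply, swapPerm]
  split_ifs
  · simp only [Equiv.swap_apply_def, Fin.ext_iff]
    grind
  all_goals rfl

theorem swapPerm_braid {N i : ℕ} (h : i + 1 + 1 < N) :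
    swapPerm N i * (swapPerm N (i + 1) * swapPerm N i) =
      swapPerm N (i + 1) * (swapPerm N i * swapPerm N (i + 1)) := by
  ext p
  rw [swapPerm_of_lt h, swapPerm_of_lt (Nat.lt_of_succ_lt h)]
  simp only [Equiv.Perm.mul_apply, Equiv.swap_apply_def, Fin.ext_iff]
  grind

section Matsumoto

variable {N : ℕ} {b : Fin N → Bool} {β : Fin N → ℕ}

/-- The first letter of a reduced word is a left descent, and the tail is again reduced. -/
theorem reduced_cons {i : ℕ} {u : List ℕ} (hi : i + 1 < N)
    (h : permLen (wordProd N (i :: u)) = (i :: u).length) :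
    permLen (wordProd N u) = u.length ∧ ¬ Asc (wordProd N (i :: u)) i hi := by
  have h1 := permLen_wordProd_le N u
  have h2 := permLen_swap_mul_le i (wordProd N u)
  rw [wordProd_cons, List.length_cons] at h
  refine ⟨by omega, fun hasc => ?_⟩
  rw [wordProd_cons] at hasc
  have := permLen_swap_mul hi _ hasc
  rw [swap_mul_cancel] at this
  omega

/-- Matsumoto's theorem for the operators `H_i`: two reduced words of the same permutation give
the same operator. If the first letters `i ≠ j` differ, both are left descents of `w`, so `w` has
reduced words beginning with `i j` and `j i` (or `i j i` and `j i j`) and with a common tail; these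
are related by the commutation or braid relation, and to the given words by induction. -/
theorem matsumoto (hβ : IsBlockFun b β) : ∀ (n : ℕ) (l l' : List ℕ),
    (∀ i ∈ l, Interior N b i) → (∀ i ∈ l', Interior N b i) →
    l.length = n → l'.length = n → wordProd N l = wordProd N l' →
    permLen (wordProd N l) = n → Hword b l = Hword b l' := by
  intro n
  induction n using Nat.strong_induction_on with
  | _ n ih =>
  -- Exchanging the two words, it suffices to treat first letters `i ≤ j`.
  have main : ∀ (i j : ℕ) (u v : List ℕ), i ≤ j →
      (∀ a ∈ i :: u, Interior N b a) → (∀ a ∈ j :: v, Interior N b a) →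
      (i :: u).length = n → (j :: v).length = n → wordProd N (i :: u) = wordProd N (j :: v) →
      permLen (wordProd N (i :: u)) = n → Hword b (i :: u) = Hword b (j :: v) := by
    intro i j u v hij hl hl' hn hn' hw hlen
    have hi : Interior N b i := hl i (by simp)
    have hj : Interior N b j := hl' j (by simp)
    have hu : ∀ a ∈ u, Interior N b a := fun a ha => hl a (by simp [ha])
    have hv : ∀ a ∈ v, Interior N b a := fun a ha => hl' a (by simp [ha])
    obtain ⟨hul, hdi⟩ := reduced_cons hi.lt (hlen.trans hn.symm)
    obtain ⟨hvl, hdj⟩ := reduced_cons hj.lt ((hw ▸ hlen).trans hn'.symm)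
    rw [← hw] at hdj
    set w := wordProd N (i :: u) with hwdef
    have hwG : w ∈ blockSub β := wordProd_mem hβ hl
    have hwu : wordProd N u = swapPerm N i * w := by
      rw [hwdef, wordProd_cons, swap_mul_cancel]
    have hwv : wordProd N v = swapPerm N j * w := by
      rw [hw, wordProd_cons, swap_mul_cancel]
    rw [List.length_cons] at hn hn'
    have hiG := swapPerm_mem hβ hi
    have hjG := swapPerm_mem hβ hj
    -- The induction hypothesis in length `n - 1`: the tails `u` and `v` may be replaced by other
    -- reduced words of the same permutations.
    have repl : ∀ (t y : List ℕ), (∀ a ∈ t, Interior N b a) → (∀ a ∈ y, Interior N b a) →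
        t.length + 1 = n → y.length = t.length → wordProd N y = wordProd N t →
        permLen (wordProd N t) = t.length → Hword b t = Hword b y := by
      intro t y h1 h2 h3 h4 h5 h6
      exact ih t.length (by omega) t y h1 h2 rfl h4 h5.symm h6
    rcases Nat.lt_or_ge i j with hlt | hge
    · rcases Nat.lt_or_ge (i + 1) j with hfar | hnear
      · -- distant letters: `w = s_i s_j w'`
        have hd2 : ¬ Asc (swapPerm N i * w) j hj.lt := by
          unfold Asc at hdj ⊢
          rw [swap_mul_inv_apply, swap_mul_inv_apply, swapPerm_of_ne, swapPerm_of_ne]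
          · exact hdj
          all_goals simp only [ne_eq]; omega
        have e1 := permLen_of_not_asc hi.lt w hdi
        have e2 := permLen_of_not_asc hj.lt _ hd2
        obtain ⟨t, ht1, ht2, ht3⟩ := exists_word hβ _ (swapPerm N j * (swapPerm N i * w))
          (mul_mem hjG (mul_mem hiG hwG)) rfl
        have r1 := repl u (j :: t) hu (by simpa using ⟨hj, ht1⟩) hn
          (by rw [List.length_cons]; omega)
          (by rw [wordProd_cons, ht2, swap_mul_cancel, hwu]) hul
        have r2 := repl v (i :: t) hv (by simpa using ⟨hi, ht1⟩) hn'
          (by rw [List.length_cons]; omega)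
          (by rw [wordProd_cons, ht2, ← mul_assoc (swapPerm N j), ← swapPerm_comm hfar,
                mul_assoc, swap_mul_cancel, hwv]) hvl
        rw [Hword_cons, Hword_cons, r1, r2, Hword_cons, Hword_cons, mul_assoc, mul_assoc,
          HopN_comm hi hj hfar]
      · -- neighbouring letters: `w = s_i s_j s_i w'`
        obtain rfl : j = i + 1 := by omega
        have h0 : ∀ h, swapPerm N i ⟨i + 1 + 1, h⟩ = ⟨i + 1 + 1, h⟩ := fun h =>
          swapPerm_of_ne _ (by simp only [ne_eq]; omega) (by simp only [ne_eq]; omega)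
        have h0' : ∀ h, swapPerm N (i + 1) ⟨i, h⟩ = ⟨i, h⟩ := fun h =>
          swapPerm_of_ne _ (by simp only [ne_eq]; omega) (by simp only [ne_eq]; omega)
        have hd2 : ¬ Asc (swapPerm N i * w) (i + 1) hj.lt := by
          unfold Asc at hdi hdj ⊢
          rw [swap_mul_inv_apply, swap_mul_inv_apply, swapPerm_right hi.lt, h0]
          exact not_lt.2 ((not_lt.1 hdj).trans (not_lt.1 hdi))
        have hd3 : ¬ Asc (swapPerm N (i + 1) * (swapPerm N i * w)) i hi.lt := by
          unfold Asc at hdi hdj ⊢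
          rw [swap_mul_inv_apply, swap_mul_inv_apply, swap_mul_inv_apply, swap_mul_inv_apply,
            swapPerm_left hj.lt, h0, h0', swapPerm_left hi.lt]
          exact hdj
        have e1 := permLen_of_not_asc hi.lt w hdi
        have e2 := permLen_of_not_asc hj.lt _ hd2
        have e3 := permLen_of_not_asc hi.lt _ hd3
        obtain ⟨t, ht1, ht2, ht3⟩ := exists_word hβ _
          (swapPerm N i * (swapPerm N (i + 1) * (swapPerm N i * w)))
          (mul_mem hiG (mul_mem hjG (mul_mem hiG hwG))) rfl
        have hbr : swapPerm N i * (swapPerm N (i + 1) * (swapPerm N i * w)) =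
            swapPerm N (i + 1) * (swapPerm N i * (swapPerm N (i + 1) * w)) := by
          simpa only [mul_assoc] using congrArg (· * w) (swapPerm_braid hj.lt)
        have r1 := repl u ((i + 1) :: i :: t) hu (by simpa using ⟨hj, hi, ht1⟩) hn
          (by rw [List.length_cons, List.length_cons]; omega)
          (by rw [wordProd_cons, wordProd_cons, ht2, swap_mul_cancel, swap_mul_cancel, hwu]) hul
        have r2 := repl v (i :: (i + 1) :: t) hv (by simpa using ⟨hi, hj, ht1⟩) hn'
          (by rw [List.length_cons, List.length_cons]; omega)
          (by rw [wordProd_cons, wordProd_cons, ht2, hbr, swap_mul_cancel, swap_mul_cancel, hwv])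
          hvl
        rw [Hword_cons, Hword_cons, r1, r2]
        simp only [Hword_cons]
        have := HopN_braid hi hj
        rw [mul_assoc, mul_assoc] at this
        rw [mul_assoc, mul_assoc, mul_assoc, mul_assoc, this]
    · obtain rfl : i = j := le_antisymm hij hge
      rw [Hword_cons, Hword_cons,
        repl u v hu hv hn (by omega) (by rw [hwu, hwv]) hul]
  intro l l' hl hl' hn hn' hw hlen
  cases l with
  | nil =>
    obtain rfl : l' = [] := by
      rw [← List.length_eq_zero_iff, hn', ← hn]; rfl
    rfl
  | cons i u =>
    cases l' with
    | nil =>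
      rw [← hn'] at hn
      simp at hn
    | cons j v =>
      rcases le_total i j with h | h
      · exact main i j u v h hl hl' hn hn' hw hlen
      · exact (main j i v u h hl' hl hn' hn hw.symm (hw ▸ hlen)).symm

theorem Hw_eq_Hword (hβ : IsBlockFun b β) {l : List ℕ} (hl : ∀ i ∈ l, Interior N b i)
    (hlen : permLen (wordProd N l) = l.length) : Hw b (wordProd N l) = Hword b l := by
  have hex : ∃ l', IsReducedWord b (wordProd N l) l' :=
    ⟨l, hl, rfl, by rw [blen_eq hβ (wordProd_mem hβ hl), hlen]⟩
  unfold Hw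
  rw [dif_pos hex]
  obtain ⟨h1, h2, h3⟩ := hex.choose_spec
  rw [blen_eq hβ (wordProd_mem hβ hl)] at h3
  exact matsumoto hβ _ _ _ h1 hl h3 hlen.symm h2 (by rw [h2])

theorem Hw_swap_mul (hβ : IsBlockFun b β) {i : ℕ} (hi : Interior N b i)
    {w : Equiv.Perm (Fin N)} (hw : w ∈ blockSub β) (hasc : Asc w i hi.lt) :
    Hw b (swapPerm N i * w) = Hw b w * HopN b i := by
  obtain ⟨l, h1, rfl, h3⟩ := exists_word hβ _ w hw rfl
  have hlen := permLen_swap_mul hi.lt _ hasc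
  rw [← wordProd_cons, Hw_eq_Hword hβ (by simpa using ⟨hi, h1⟩)
    (by rw [wordProd_cons, hlen, List.length_cons, h3]), Hw_eq_Hword hβ h1 h3.symm, Hword_cons]

/-! ### The symmetrizer `H_0` -/

theorem mul_of_quadratic {K V : Type*} [Field K] [AddCommGroup V] [Module K V] {q : K}
    (hq : q ≠ 0) {H P S : Module.End K V} (hH : H * H = 1 - (q - q⁻¹) • H)
    (hS : S = P + (-q) • (P * H)) : S * H = (-q) • S := by
  have h2 : P * H * H = P - (q - q⁻¹) • (P * H) := by
    rw [mul_assoc, hH, mul_sub, mul_one, mul_smul_comm]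
  rw [hS, add_mul, smul_mul_assoc, h2]
  match_scalars <;> field_simp
  ring

open scoped Classical in
/-- `H_i H_0 = -q H_0` (operators composing from left to right). Grouping `w` with `s_i w` for the
left ascents `i` of `w` writes `H_0` as `(1 - q H_i) P`, and
`H_i (1 - q H_i) = -q (1 - q H_i)` by the quadratic relation. -/
theorem sum_mul_HopN (hβ : IsBlockFun b β) {i : ℕ} (hi : Interior N b i) (a : ℤ) :
    (∑ w ∈ univ.filter (fun w => w ∈ blockSub β),
        ((-qq) ^ ((blen b w : ℤ) - a)) • Hw b w) * HopN b i =
      (-qq) • ∑ w ∈ univ.filter (fun w => w ∈ blockSub β),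
        ((-qq) ^ ((blen b w : ℤ) - a)) • Hw b w := by
  have hq : (-qq) ≠ 0 := neg_ne_zero.2 qq_ne_zero
  have hs := swapPerm_mem hβ hi
  have key : (∑ w ∈ univ.filter (fun w => w ∈ blockSub β),
        ((-qq) ^ ((blen b w : ℤ) - a)) • Hw b w) =
      (∑ w ∈ (univ.filter (fun w => w ∈ blockSub β)).filter (fun w => Asc w i hi.lt),
        ((-qq) ^ ((blen b w : ℤ) - a)) • Hw b w) +
      (-qq) • ((∑ w ∈ (univ.filter (fun w => w ∈ blockSub β)).filter (fun w => Asc w i hi.lt),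
        ((-qq) ^ ((blen b w : ℤ) - a)) • Hw b w) * HopN b i) := by
    rw [← sum_filter_add_sum_filter_not _ (fun w => Asc w i hi.lt)]
    congr 1
    rw [sum_mul, smul_sum]
    symm
    refine sum_bij' (fun w _ => swapPerm N i * w) (fun w _ => swapPerm N i * w) ?_ ?_ ?_ ?_ ?_
    · intro w hw
      simp only [mem_filter, mem_univ, true_and] at hw ⊢
      exact ⟨mul_mem hs hw.1, fun h => (asc_swap_mul hi.lt w).1 h hw.2⟩
    · intro w hw
      simp only [mem_filter, mem_univ, true_and] at hw ⊢
      exact ⟨mul_mem hs hw.1, (asc_swap_mul hi.lt w).2 hw.2⟩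
    · intro w _; exact swap_mul_cancel i w
    · intro w _; exact swap_mul_cancel i w
    · intro w hw
      simp only [mem_filter, mem_univ, true_and] at hw
      rw [Hw_swap_mul hβ hi hw.1 hw.2, blen_eq hβ hw.1, blen_eq hβ (mul_mem hs hw.1),
        permLen_swap_mul hi.lt w hw.2, smul_mul_assoc, smul_smul]
      congr 1
      rw [show ((permLen w + 1 : ℕ) : ℤ) - a = ((permLen w : ℤ) - a) + 1 by push_cast; ring,
        zpow_add₀ hq, zpow_one, mul_comm]
  exact mul_of_quadratic qq_ne_zero (HopN_quadratic hi) key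

end Matsumoto

/-! ### The block function of a block decomposition -/

section Blocks

variable {N d : ℕ} {b : Fin N → Bool} {r : ℕ → ℕ} {β : Fin N → ℕ}

theorem r_mono (hblock : BlockData N b d r) {k l : ℕ} (hkl : k ≤ l) (hl : l ≤ d) :
    r k ≤ r l := by
  induction l, hkl using Nat.le_induction with
  | base => exact le_rfl
  | succ l hkl ih => exact (ih (by omega)).trans (hblock.2.2.1 l (by omega)).le

theorem block_le (hblock : BlockData N b d r) {k k' p p' : ℕ} (hk : k < d)
    (h1 : r k ≤ p) (hpp : p ≤ p') (h2 : p' < r (k' + 1)) : k ≤ k' := by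
  by_contra! hlt
  have := r_mono hblock (show k' + 1 ≤ k by omega) hk.le
  omega

/-- Each position lies in exactly one block, and sending a position to the index of its block is a
block function in the sense of `IsBlockFun`. -/
theorem exists_blockFun (hblock : BlockData N b d r) :
    ∃ β : Fin N → ℕ, IsBlockFun b β ∧
      (∀ p, β p < d ∧ r (β p) ≤ p.val ∧ p.val < r (β p + 1)) ∧
      (∀ k < d, ∀ p : Fin N, r k ≤ p.val → p.val < r (k + 1) → β p = k) := by
  obtain ⟨h0, hd, hlt, hconst, hne⟩ := id hblock
  have hin : ∀ p : Fin N, Nat.findGreatest (fun k => r k ≤ p.val) d < d ∧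
      r (Nat.findGreatest (fun k => r k ≤ p.val) d) ≤ p.val ∧
      p.val < r (Nat.findGreatest (fun k => r k ≤ p.val) d + 1) := by
    intro p
    have h1 : r (Nat.findGreatest (fun k => r k ≤ p.val) d) ≤ p.val :=
      Nat.findGreatest_spec (P := fun k => r k ≤ p.val) (Nat.zero_le d) (by simp [h0])
    have h2 : Nat.findGreatest (fun k => r k ≤ p.val) d < d := by
      refine lt_of_le_of_ne (Nat.findGreatest_le d) fun he => ?_
      rw [he, hd] at h1
      omega
    refine ⟨h2, h1, ?_⟩
    by_contra! hcon
    exact Nat.findGreatest_is_greatest (P := fun k => r k ≤ p.val) (Nat.lt_succ_self _)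
      (by omega) hcon
  set β : Fin N → ℕ := fun p => Nat.findGreatest (fun k => r k ≤ p.val) d with hβdef
  change ∀ p : Fin N, β p < d ∧ r (β p) ≤ p.val ∧ p.val < r (β p + 1) at hin
  have hmono : Monotone β := fun p p' hpp =>
    block_le hblock (hin p).1 (hin p).2.1 hpp (hin p').2.2
  refine ⟨β, ⟨hmono, ?_⟩, hin, ?_⟩
  · intro i h
    obtain ⟨a1, a2, a3⟩ := hin ⟨i, Nat.lt_of_succ_lt h⟩
    obtain ⟨c1, c2, c3⟩ := hin ⟨i + 1, h⟩
    constructor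
    · rintro ⟨_, _, he⟩
      by_contra hneq
      have hle : β ⟨i, Nat.lt_of_succ_lt h⟩ ≤ β ⟨i + 1, h⟩ := hmono (by simp [Fin.le_def])
      have hr := r_mono hblock (show β ⟨i, Nat.lt_of_succ_lt h⟩ + 1 ≤ β ⟨i + 1, h⟩ by omega) c1.le
      -- the block boundary lies between `i` and `i + 1`
      have hri : r (β ⟨i + 1, h⟩) = i + 1 := by
        dsimp only at a3 c2
        omega
      refine hne (β ⟨i + 1, h⟩) (by omega) c1 (by omega) (by omega) ?_
      simp only [hri, Nat.add_sub_cancel]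
      exact he
    · intro he
      refine ⟨Nat.lt_of_succ_lt h, h, hconst _ c1 _ _ ?_ ?_ c2 c3⟩
      · rw [← he]; exact a2
      · rw [← he]; exact a3
  · intro k hk p h1 h2
    exact le_antisymm (block_le hblock (hin p).1 (hin p).2.1 le_rfl h2)
      (block_le hblock hk h1 le_rfl (hin p).2.2)

theorem blockPerm_iff (hin : ∀ p, β p < d ∧ r (β p) ≤ p.val ∧ p.val < r (β p + 1))
    (huni : ∀ k < d, ∀ p : Fin N, r k ≤ p.val → p.val < r (k + 1) → β p = k)
    (x : Equiv.Perm (Fin N)) : BlockPerm N d r x ↔ x ∈ blockSub β := by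
  constructor
  · intro hx p
    obtain ⟨h1, h2, h3⟩ := hin p
    obtain ⟨h4, h5⟩ := hx _ h1 p h2 h3
    exact huni _ h1 _ h4 h5
  · intro hx k hk p h1 h2
    have := huni k hk p h1 h2
    rw [← hx p] at this
    rw [← this]
    exact (hin (x p)).2

theorem w0_involutive (hin : ∀ p, β p < d ∧ r (β p) ≤ p.val ∧ p.val < r (β p + 1))
    {w0 : Equiv.Perm (Fin N)} (hw0 : IsW0 N d r w0) (p : Fin N) : w0 (w0 p) = p := by
  obtain ⟨h1, h2, h3⟩ := hin p
  have e1 := hw0 _ h1 p h2 h3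
  have e2 := hw0 _ h1 (w0 p) (by omega) (by omega)
  apply Fin.ext
  omega

theorem sgn_eq_of_block (hblock : BlockData N b d r) {k : ℕ} (hk : k < d) {i j : Fin N}
    (hi : r k ≤ i.val) (hi' : i.val < r (k + 1)) (hj : r k ≤ j.val) (hj' : j.val < r (k + 1)) :
    sgn b i = sgn b j := by
  unfold sgn
  rw [hblock.2.2.2.1 k hk i j hi hi' hj hj']

theorem dominant_comp_w0_iff (hblock : BlockData N b d r)
    (hin : ∀ p, β p < d ∧ r (β p) ≤ p.val ∧ p.val < r (β p + 1))
    {w0 : Equiv.Perm (Fin N)} (hw0 : IsW0 N d r w0) (g : Fin N → ℤ) :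
    Dominant b d r (g ∘ ⇑w0) ↔ StrictAntidominant b d r g := by
  constructor
  · intro hD k hk i j h1 h2 h3
    have ei := hw0 k hk i h1 (by omega)
    have ej := hw0 k hk j (by omega) h3
    have := hD k hk (w0 j) (w0 i) (by omega) (by omega) (by omega)
    simp only [Function.comp_apply, w0_involutive hin hw0] at this
    rwa [sgn_eq_of_block hblock hk (i := w0 j) (j := i) (by omega) (by omega) h1 (by omega)]
      at this
  · intro hA k hk i j h1 h2 h3
    have ei := hw0 k hk i h1 (by omega)
    have ej := hw0 k hk j (by omega) h3
    have := hA k hk (w0 j) (w0 i) (by omega) (by omega) (by omega)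
    rwa [sgn_eq_of_block hblock hk (i := w0 j) (j := i) (by omega) (by omega) h1 (by omega)]
      at this

/-- An antidominant function that is not strictly antidominant takes equal values at two
neighbouring positions of one block. -/
theorem exists_adjacent_eq (hβ : IsBlockFun b β)
    (huni : ∀ k < d, ∀ p : Fin N, r k ≤ p.val → p.val < r (k + 1) → β p = k)
    (hblock : BlockData N b d r) {g : Fin N → ℤ} (hanti : Antidominant b d r g)
    (hns : ¬ StrictAntidominant b d r g) :
    ∃ (i : ℕ) (hi : Interior N b i),
      g ⟨i, Nat.lt_of_succ_lt hi.lt⟩ = g ⟨i + 1, hi.lt⟩ := by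
  unfold StrictAntidominant at hns
  push Not at hns
  obtain ⟨k, hk, i, j, h1, h2, h3, h4⟩ := hns
  have hlt : i.val + 1 < N := by omega
  have hi : Interior N b i.val := by
    rw [hβ.2 _ hlt, huni k hk i h1 (by omega),
      huni k hk ⟨i.val + 1, hlt⟩ (by dsimp only; omega) (by dsimp only; omega)]
  refine ⟨i.val, hi, (sgn_mul_inj b i).1 (le_antisymm ?_ ?_)⟩
  · exact hanti k hk i ⟨i.val + 1, hlt⟩ h1 (by simp) (by dsimp only; omega)
  · refine le_trans ?_ h4
    rcases Nat.lt_or_ge (i.val + 1) j.val with h | h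
    · have := hanti k hk ⟨i.val + 1, hlt⟩ j (by dsimp only; omega) h h3
      rwa [sgn_eq_of_block hblock hk (i := ⟨i.val + 1, hlt⟩) (j := i) (by dsimp only; omega)
        (by dsimp only; omega) h1 (by omega)] at this
    · have : j = ⟨i.val + 1, hlt⟩ := Fin.ext (by dsimp only; omega)
      rw [this]

/-! ### `H_0` on basis vectors -/

theorem H0_mul_HopN (hβ : IsBlockFun b β)
    (hin : ∀ p, β p < d ∧ r (β p) ≤ p.val ∧ p.val < r (β p + 1))
    (huni : ∀ k < d, ∀ p : Fin N, r k ≤ p.val → p.val < r (k + 1) → β p = k)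
    {i : ℕ} (hi : Interior N b i) (w0 : Equiv.Perm (Fin N)) :
    H0 b d r w0 * HopN b i = (-qq) • H0 b d r w0 := by
  classical
  have : H0 b d r w0 = ∑ w ∈ univ.filter (fun w => w ∈ blockSub β),
      ((-qq) ^ ((blen b w : ℤ) - (blen b w0 : ℤ))) • Hw b w := by
    unfold H0
    refine sum_congr ?_ fun _ _ => rfl
    ext w
    simp only [mem_filter, mem_univ, true_and, blockPerm_iff hin huni w]
  rw [this]
  convert sum_mul_HopN hβ hi (blen b w0 : ℤ)

theorem single_swap_of_lt {T : Module.End (RatFunc ℚ) (Tsp N)} {i : ℕ} (hi : Interior N b i)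
    (hT : T * HopN b i = (-qq) • T) (g : Fin N → ℤ)
    (hg : sgn b ⟨i, Nat.lt_of_succ_lt hi.lt⟩ * g ⟨i, Nat.lt_of_succ_lt hi.lt⟩ <
      sgn b ⟨i, Nat.lt_of_succ_lt hi.lt⟩ * g ⟨i + 1, hi.lt⟩) :
    T (Finsupp.single (g ∘ ⇑(swapPerm N i)) 1) = (-qq) • T (Finsupp.single g 1) := by
  have h1 := LinearMap.congr_fun hT (stdBasis g)
  rwa [Module.End.mul_apply, (heckeRule_HopN b hi.lt).lt g hg, ← swapPerm_of_lt hi.lt] at h1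

/-- `q⁻¹ ≠ -q` in `ℚ(q)`. -/
theorem qq_inv_add_ne_zero : qq⁻¹ + qq ≠ 0 := by
  intro h
  have hq := qq_ne_zero
  have h1 : qq ^ 2 + 1 = 0 := by
    field_simp at h
    linear_combination h
  have h2 : algebraMap (Polynomial ℚ) (RatFunc ℚ) (Polynomial.X ^ 2 + 1) = 0 := by
    simpa [qq] using h1
  rw [map_eq_zero_iff _ (RatFunc.algebraMap_injective ℚ)] at h2
  have := congrArg (Polynomial.eval 0) h2
  simp at this

theorem single_eq_zero_of_eq {T : Module.End (RatFunc ℚ) (Tsp N)} {i : ℕ}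
    (hi : Interior N b i) (hT : T * HopN b i = (-qq) • T) (g : Fin N → ℤ)
    (hg : g ⟨i, Nat.lt_of_succ_lt hi.lt⟩ = g ⟨i + 1, hi.lt⟩) :
    T (Finsupp.single g 1) = 0 := by
  have h1 := LinearMap.congr_fun hT (stdBasis g)
  rw [Module.End.mul_apply, (heckeRule_HopN b hi.lt).eq g (by rw [hg]), map_smul,
    LinearMap.smul_apply] at h1
  have h2 : (qq⁻¹ + qq) • T (stdBasis g) = 0 := by
    rw [add_smul, h1, ← add_smul, neg_add_cancel, zero_smul]
  exact (smul_eq_zero.1 h2).resolve_left qq_inv_add_ne_zero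

theorem comp_swap_mul_inv (g : Fin N → ℤ) (i : ℕ) (w : Equiv.Perm (Fin N)) :
    g ∘ ⇑(swapPerm N i * w)⁻¹ = (g ∘ ⇑w⁻¹) ∘ ⇑(swapPerm N i) := by
  ext p
  rw [Function.comp_apply, swap_mul_inv_apply]
  rfl

/-- An induction principle for `𝔖^b`: every element is reached from `1` by left multiplications
with interior transpositions, each of them increasing the length. -/
theorem blockSub_induction (hβ : IsBlockFun b β) {P : Equiv.Perm (Fin N) → Prop} (h1 : P 1)
    (hs : ∀ (i : ℕ) (hi : Interior N b i) (w : Equiv.Perm (Fin N)), w ∈ blockSub β →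
      Asc w i hi.lt → P w → P (swapPerm N i * w))
    (w : Equiv.Perm (Fin N)) (hw : w ∈ blockSub β) : P w := by
  induction hn : permLen w generalizing w with
  | zero =>
    by_cases hne : w = 1
    · rwa [hne]
    · obtain ⟨i, hi, hd⟩ := exists_descent hβ hw hne
      have := permLen_of_not_asc hi.lt w hd
      omega
  | succ n ih =>
    by_cases hne : w = 1
    · rwa [hne]
    · obtain ⟨i, hi, hd⟩ := exists_descent hβ hw hne
      have := permLen_of_not_asc hi.lt w hd
      have hmem := mul_mem (swapPerm_mem hβ hi) hw
      have := hs i hi _ hmem ((asc_swap_mul hi.lt w).2 hd) (ih _ hmem (by omega))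
      rwa [swap_mul_cancel] at this

/-- If `H_i T = -q T` for all interior `i`, then `M_{g·x⁻¹} T = (-q)^{ℓ(x)} M_g T` for strictly
antidominant `g` and `x ∈ 𝔖^b`. Each letter of a reduced word of `x` exchanges two neighbouring
values that are still in antidominant order. -/
theorem single_comp_inv (hβ : IsBlockFun b β) {T : Module.End (RatFunc ℚ) (Tsp N)}
    (hT : ∀ i, Interior N b i → T * HopN b i = (-qq) • T) (g : Fin N → ℤ)
    (hg : ∀ p p' : Fin N, p < p' → β p = β p' → sgn b p * g p < sgn b p * g p')
    (hsgn : ∀ p p' : Fin N, β p = β p' → sgn b p = sgn b p')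
    (x : Equiv.Perm (Fin N)) (hx : x ∈ blockSub β) :
    T (Finsupp.single (g ∘ ⇑x⁻¹) 1) = (-qq) ^ permLen x • T (Finsupp.single g 1) := by
  refine blockSub_induction hβ (P := fun x => T (Finsupp.single (g ∘ ⇑x⁻¹) 1) =
    (-qq) ^ permLen x • T (Finsupp.single g 1)) ?_ ?_ x hx
  · simp [permLen_one]
  · intro i hi w hw hasc ih
    have hw' : w⁻¹ ∈ blockSub β := inv_mem hw
    have he : β (w⁻¹ ⟨i, Nat.lt_of_succ_lt hi.lt⟩) = β (w⁻¹ ⟨i + 1, hi.lt⟩) := by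
      rw [hw', hw', (hβ.2 i hi.lt).1 hi]
    have hlt := hg _ _ hasc he
    rw [hsgn _ _ (hw' _)] at hlt
    rw [comp_swap_mul_inv, single_swap_of_lt hi (hT i hi) _ hlt, ih, permLen_swap_mul hi.lt w hasc,
      smul_smul, pow_succ']

/-- If `H_i T = -q T` for all interior `i`, the vanishing of `M_g T` passes to the `𝔖^b`-orbit
of `g`. -/
theorem single_comp_inv_zero (hβ : IsBlockFun b β) {T : Module.End (RatFunc ℚ) (Tsp N)}
    (hT : ∀ i, Interior N b i → T * HopN b i = (-qq) • T) (g : Fin N → ℤ)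
    (hg : T (Finsupp.single g 1) = 0)
    (x : Equiv.Perm (Fin N)) (hx : x ∈ blockSub β) :
    T (Finsupp.single (g ∘ ⇑x⁻¹) 1) = 0 := by
  refine blockSub_induction hβ (P := fun x => T (Finsupp.single (g ∘ ⇑x⁻¹) 1) = 0) ?_ ?_ x hx
  · simpa using hg
  · intro i hi w _ _ ih
    rw [comp_swap_mul_inv]
    set h := g ∘ ⇑w⁻¹
    rcases lt_trichotomy
      (sgn b ⟨i, Nat.lt_of_succ_lt hi.lt⟩ * h ⟨i, Nat.lt_of_succ_lt hi.lt⟩)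
      (sgn b ⟨i, Nat.lt_of_succ_lt hi.lt⟩ * h ⟨i + 1, hi.lt⟩) with hc | hc | hc
    · rw [single_swap_of_lt hi (hT i hi) h hc, ih, smul_zero]
    · apply single_eq_zero_of_eq hi (hT i hi)
      simp only [Function.comp_apply, swapPerm_left hi.lt, swapPerm_right hi.lt]
      exact ((sgn_mul_inj b _).1 hc).symm
    · have := single_swap_of_lt hi (hT i hi) (h ∘ ⇑(swapPerm N i)) (by
        simpa only [Function.comp_apply, swapPerm_left hi.lt, swapPerm_right hi.lt] using hc)
      rw [swapPerm_of_lt hi.lt, comp_swap_swap, ih, eq_comm, smul_eq_zero] at this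
      rw [swapPerm_of_lt hi.lt]
      exact this.resolve_left (neg_ne_zero.2 qq_ne_zero)

end Blocks

/-- `M_f H_0 = (−q)^{ℓ(x)} K_{f·x·w_0}` if `f·x·w_0` is `b`-dominant and `M_f H_0 = 0`
otherwise, where `x` is the unique element of minimal length in `𝔖^b` such that
`f·x` is `b`-antidominant. -/
theorem MfH0_eq (m n d : ℕ) (b : Fin (m + n) → Bool) (r : ℕ → ℕ)
    (w0 : Equiv.Perm (Fin (m + n))) (hb : IsZeroOneSeq m n b)
    (hblock : BlockData (m + n) b d r) (hw0 : IsW0 (m + n) d r w0)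
    (f : Fin (m + n) → ℤ) (x : Equiv.Perm (Fin (m + n)))
    (hx : BlockPerm (m + n) d r x) (hanti : Antidominant b d r (f ∘ ⇑x))
    (hmin : ∀ y : Equiv.Perm (Fin (m + n)), BlockPerm (m + n) d r y →
      Antidominant b d r (f ∘ ⇑y) → blen b x ≤ blen b y)
    (huniq : ∀ y : Equiv.Perm (Fin (m + n)), BlockPerm (m + n) d r y →
      Antidominant b d r (f ∘ ⇑y) → blen b y = blen b x → y = x) :
    (Dominant b d r (f ∘ ⇑x ∘ ⇑w0) →
      H0 b d r w0 (Finsupp.single f 1) =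
        ((-qq) ^ (blen b x)) • Kel b d r w0 (f ∘ ⇑x ∘ ⇑w0)) ∧
    (¬ Dominant b d r (f ∘ ⇑x ∘ ⇑w0) → H0 b d r w0 (Finsupp.single f 1) = 0) := by
  obtain ⟨β, hβ, hin, huni⟩ := exists_blockFun hblock
  have hxG : x ∈ blockSub β := (blockPerm_iff hin huni x).1 hx
  have hT := fun i (hi : Interior (m + n) b i) => H0_mul_HopN hβ hin huni hi w0
  have hfx : (f ∘ ⇑x) ∘ ⇑x⁻¹ = f := by
    ext p
    simp
  rw [← Function.comp_assoc, dominant_comp_w0_iff hblock hin hw0]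
  constructor
  · intro hstrict
    have hK : Kel b d r w0 ((f ∘ ⇑x) ∘ ⇑w0) = H0 b d r w0 (Finsupp.single (f ∘ ⇑x) 1) := by
      unfold Kel
      congr 2
      ext p
      simp [w0_involutive hin hw0 p]
    rw [hK, blen_eq hβ hxG]
    have := single_comp_inv hβ hT (f ∘ ⇑x)
      (fun p p' hlt he => hstrict (β p) (hin p).1 p p' (hin p).2.1 hlt (he ▸ (hin p').2.2))
      (fun p p' he => sgn_eq_of_block hblock (hin p).1 (hin p).2.1 (hin p).2.2
        (he ▸ (hin p').2.1) (he ▸ (hin p').2.2))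
      x hxG
    rwa [hfx] at this
  · intro hns
    obtain ⟨i, hi, he⟩ := exists_adjacent_eq hβ huni hblock hanti hns
    have := single_comp_inv_zero hβ hT (f ∘ ⇑x)
      (single_eq_zero_of_eq hi (hT i hi) _ he) x hxG
    rwa [hfx] at this

end
end
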